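/- Let (Ω,F,ℙ) be a probability space and G a sub-σ-algebra. If h : L¹(F) → L¹(G) is monotone, sublinear, G-normalized, and continuous from above, then there exists a convex set Q of probability measures on (Ω,F), each absolutely continuous with respect to ℙ and agreeing with ℙ on G, such that h(X) = sup_{Q ∈ Q} E^Q[X | G] for all X ∈ L¹(F). -/

import Mathlib

open MeasureTheory
open scoped NNReal ENNReal

/-!
Averaging turns `h` into the scalar sublinear functional `p X = ∫ h X ∂ℙ` on `L¹(ℙ)`. Being
monotone and sublinear on a Banach lattice, `p` is automatically Lipschitz, so every linear
functional dominated by `p` is positive and bounded, hence integration against a measure `Q` of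
bounded density. By Hahn–Banach, for each `X` some such `Q` satisfies `∫ X ∂Q = p X`. Normalization
of `h` forces `Q = ℙ` on `G` and lets the domination be localized to sets of `G`, that is,
`Q[X | G] ≤ h X`. For the `Q` chosen by Hahn–Banach both sides have the same integral, so they are
equal.
-/

section Sublinear

theorem exists_linearMap_eq_of_sublinear {E : Type*} [AddCommGroup E] [Module ℝ E] {p : E → ℝ}
    (hsub : ∀ x y, p (x + y) ≤ p x + p y)
    (hph : ∀ a : ℝ, 0 ≤ a → ∀ x, p (a • x) = a * p x) (x₀ : E) :
    ∃ ℓ : E →ₗ[ℝ] ℝ, ℓ x₀ = p x₀ ∧ ∀ x, ℓ x ≤ p x := by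
  have hp0 : p 0 = 0 := by simpa using hph 0 le_rfl 0
  have hneg : ∀ x, -p x ≤ p (-x) := fun x => by
    have := hsub x (-x)
    rw [add_neg_cancel, hp0] at this
    linarith
  have hle : ∀ c : ℝ, c * p x₀ ≤ p (c • x₀) := fun c => by
    rcases le_total 0 c with hc | hc
    · exact (hph c hc x₀).ge
    · have := hneg (-c • x₀)
      rw [hph (-c) (neg_nonneg.2 hc), neg_smul, neg_neg] at this
      linarith
  have hspan : ∀ c : ℝ, c • x₀ = 0 → c • p x₀ = 0 := fun c hc => by
    rcases smul_eq_zero.1 hc with rfl | rfl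
    · exact zero_smul ℝ _
    · rw [hp0, smul_zero]
  obtain ⟨ℓ, hℓ_ext, hℓ_le⟩ := exists_extension_of_le_sublinear
    (LinearPMap.mkSpanSingleton' x₀ (p x₀) hspan) p (fun c hc => hph c hc.le) hsub (by
      rintro ⟨x, hx⟩
      obtain ⟨c, rfl⟩ := Submodule.mem_span_singleton.1 hx
      rw [LinearPMap.mkSpanSingleton'_apply]
      exact hle c)
  refine ⟨ℓ, ?_, hℓ_le⟩
  exact (hℓ_ext ⟨x₀, Submodule.mem_span_singleton_self x₀⟩).trans
    (LinearPMap.mkSpanSingleton'_apply_self ..)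

variable {E E' : Type*} [NormedAddCommGroup E] [Lattice E] [HasSolidNorm E] [IsOrderedAddMonoid E]
  [NormedSpace ℝ E] [PosSMulMono ℝ E] [CompleteSpace E]
  [NormedAddCommGroup E'] [Lattice E'] [HasSolidNorm E'] [IsOrderedAddMonoid E'] [NormedSpace ℝ E']
  {h : E → E'}

-- If `h` were unbounded on the positive cone, unit vectors `u n ≥ 0` with `‖h (u n)‖ > 4 ^ n` would
-- force `‖h (∑ u n / 2 ^ n)‖ > 2 ^ n` for every `n`.
theorem exists_norm_map_abs_le_of_monotone (hmono : Monotone h)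
    (hph : ∀ a : ℝ, 0 ≤ a → ∀ x, h (a • x) = a • h x) :
    ∃ C : ℝ≥0, ∀ x, ‖h |x|‖ ≤ C * ‖x‖ := by
  have h0 : h 0 = 0 := by simpa using hph 0 le_rfl 0
  by_contra! hunbdd
  choose x hx using fun n : ℕ => hunbdd ((4 : ℝ≥0) ^ n)
  have hxpos : ∀ n, 0 < ‖x n‖ := fun n => norm_pos_iff.2 fun hn => by simpa [hn, h0] using hx n
  let a : ℕ → ℝ := fun n => (1 / 2) ^ n / ‖x n‖
  have ha : ∀ n, 0 ≤ a n := fun n => by positivity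
  have hnonneg : ∀ n, 0 ≤ a n • |x n| := fun n => smul_nonneg (ha n) (abs_nonneg _)
  have hnorm : ∀ n, ‖a n • |x n|‖ = (1 / 2 : ℝ) ^ n := fun n => by
    rw [norm_smul, Real.norm_of_nonneg (ha n), norm_abs_eq_norm, div_mul_cancel₀ _ (hxpos n).ne']
  have hsum : Summable fun n => a n • |x n| :=
    .of_norm (by simpa only [hnorm] using summable_geometric_two)
  have hlarge : ∀ n, (2 : ℝ) ^ n < ‖h (a n • |x n|)‖ := fun n => calc
    (2 : ℝ) ^ n = a n * (4 ^ n * ‖x n‖) := by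
      rw [div_mul_eq_mul_div, mul_left_comm, mul_div_assoc, mul_div_cancel_right₀ _ (hxpos n).ne',
        mul_comm, ← mul_pow]
      norm_num
    _ < a n * ‖h |x n|‖ :=
      mul_lt_mul_of_pos_left (by simpa using hx n) (div_pos (by positivity) (hxpos n))
    _ = ‖h (a n • |x n|)‖ := by rw [hph _ (ha n), norm_smul, Real.norm_of_nonneg (ha n)]
  have hbound : ∀ n, ‖h (a n • |x n|)‖ ≤ ‖h (∑' i, a i • |x i|)‖ := fun n => by
    have hle : h (a n • |x n|) ≤ h (∑' i, a i • |x i|) :=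
      hmono (hsum.le_tsum n fun i _ => hnonneg i)
    have hpos : 0 ≤ h (a n • |x n|) := h0 ▸ hmono (hnonneg n)
    refine norm_le_norm_of_abs_le_abs ?_
    rwa [abs_of_nonneg hpos, abs_of_nonneg (hpos.trans hle)]
  obtain ⟨n, hn⟩ := pow_unbounded_of_one_lt ‖h (∑' i, a i • |x i|)‖ (one_lt_two (α := ℝ))
  exact ((hlarge n).trans_le (hbound n)).not_gt hn

theorem exists_lipschitzWith_of_monotone_of_sublinear (hmono : Monotone h)
    (hsub : ∀ x y, h (x + y) ≤ h x + h y)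
    (hph : ∀ a : ℝ, 0 ≤ a → ∀ x, h (a • x) = a • h x) :
    ∃ C : ℝ≥0, LipschitzWith C h := by
  obtain ⟨C, hC⟩ := exists_norm_map_abs_le_of_monotone hmono hph
  have hdiff : ∀ x y, h x - h y ≤ h |x - y| := fun x y => calc
    h x - h y ≤ h (x - y) := sub_le_iff_le_add.2 (by simpa using hsub (x - y) y)
    _ ≤ h |x - y| := hmono (le_abs_self _)
  have habs : ∀ x y, |h x - h y| ≤ h |x - y| := fun x y =>
    abs_le'.2 ⟨hdiff x y, by simpa only [neg_sub, abs_sub_comm x y] using hdiff y x⟩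
  refine ⟨C, LipschitzWith.of_dist_le_mul fun x y => ?_⟩
  rw [dist_eq_norm, dist_eq_norm]
  exact (norm_le_norm_of_abs_le_abs ((habs x y).trans (le_abs_self _))).trans (hC _)

end Sublinear

section Lp

variable {Ω E : Type*} {mΩ : MeasurableSpace Ω} {μ Q : Measure Ω} {C : ℝ≥0}
  [NormedAddCommGroup E]

instance instPosSMulMonoLp [Lattice E] [NormedSpace ℝ E] [PosSMulMono ℝ E]
    {p : ℝ≥0∞} : PosSMulMono ℝ (Lp E p μ) where
  smul_le_smul_of_nonneg_left a ha X Y hXY := by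
    rw [← Lp.coeFn_le] at hXY ⊢
    filter_upwards [hXY, Lp.coeFn_smul a X, Lp.coeFn_smul a Y] with ω hω hX hY
    rw [hX, hY]
    exact smul_le_smul_of_nonneg_left hω ha

theorem integral_coeFn_mono : Monotone fun X : Lp ℝ 1 μ => ∫ ω, X ω ∂μ := fun X Y hXY =>
  integral_mono_ae (L1.integrable_coeFn X) (L1.integrable_coeFn Y) ((Lp.coeFn_le X Y).2 hXY)

theorem absolutelyContinuous_of_le_smul (hQ : Q ≤ C • μ) : Q ≪ μ :=
  (Measure.absolutelyContinuous_of_le hQ).trans Measure.smul_absolutelyContinuous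

theorem integrable_coeFn_of_le_smul (hQ : Q ≤ C • μ) (X : Lp E 1 μ) : Integrable X Q :=
  (L1.integrable_coeFn X).of_measure_le_smul (c := C) ENNReal.coe_ne_top hQ

variable [NormedSpace ℝ E]

theorem continuous_integral_coeFn_of_le_smul (hQ : Q ≤ C • μ) :
    Continuous fun X : Lp E 1 μ => ∫ ω, X ω ∂Q :=
  (continuous_integral.comp (continuous_L1_toL1 (C : ℝ≥0∞) ENNReal.coe_ne_top hQ)).congr fun X =>
    integral_congr_ae (integrable_coeFn_of_le_smul hQ X).coeFn_toL1

theorem integral_indicatorConstLp_of_absolutelyContinuous [CompleteSpace E] (hQ : Q ≪ μ)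
    {p : ℝ≥0∞} {s : Set Ω} (hs : MeasurableSet s) (hμs : μ s ≠ ∞) (c : E) :
    ∫ ω, indicatorConstLp p hs hμs c ω ∂Q = Q.real s • c := by
  rw [integral_congr_ae (hQ.ae_eq indicatorConstLp_coeFn), integral_indicator_const c hs]

theorem enorm_map_indicatorConstLp_one_le (ℓ : Lp ℝ 1 μ →L[ℝ] E) {s : Set Ω}
    (hs : MeasurableSet s) (hμs : μ s ≠ ∞) :
    ‖ℓ (indicatorConstLp 1 hs hμs 1)‖ₑ ≤ (‖ℓ‖₊ • μ) s := calc
  ‖ℓ (indicatorConstLp 1 hs hμs 1)‖ₑ ≤ ‖ℓ‖ₑ * ‖indicatorConstLp 1 hs hμs (1 : ℝ)‖ₑ :=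
    ℓ.le_opENorm _
  _ ≤ ‖ℓ‖ₑ * μ s := by
    gcongr
    simpa using enorm_indicatorConstLp_le (p := 1) (hs := hs) (hμs := hμs) (c := (1 : ℝ))
  _ = (‖ℓ‖₊ • μ) s := rfl

theorem exists_vectorMeasure_apply_eq [IsFiniteMeasure μ] (ℓ : Lp ℝ 1 μ →L[ℝ] E) :
    ∃ ν : VectorMeasure Ω E, ∀ s (hs : MeasurableSet s),
      ν s = ℓ (indicatorConstLp 1 hs (measure_ne_top μ s) 1) := by
  classical
  let ν : Set Ω → E := fun s =>
    if hs : MeasurableSet s then ℓ (indicatorConstLp 1 hs (measure_ne_top μ s) 1) else 0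
  have hν : ∀ {s} (hs : MeasurableSet s), ν s = ℓ (indicatorConstLp 1 hs (measure_ne_top μ s) 1) :=
    fun hs => dif_pos hs
  refine ⟨.of_additive_of_le_measure ν (μ := ‖ℓ‖₊ • μ) (fun s => ?_) (fun s t hs ht hst => ?_)
    fun s hs => dif_neg hs, fun s hs => hν hs⟩
  · by_cases hs : MeasurableSet s
    · rw [hν hs]
      exact enorm_map_indicatorConstLp_one_le ℓ hs _
    · simp [ν, hs]
  · rw [hν hs, hν ht, hν (hs.union ht), ← map_add, indicatorConstLp_disjoint_union hs ht _ _ hst]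

theorem integral_eq_of_forall_indicatorConstLp [IsFiniteMeasure μ]
    (hQ : Q ≤ C • μ) {ℓ : StrongDual ℝ (Lp ℝ 1 μ)}
    (hℓ : ∀ s (hs : MeasurableSet s), ℓ (indicatorConstLp 1 hs (measure_ne_top μ s) 1) = Q.real s)
    (X : Lp ℝ 1 μ) : ∫ ω, X ω ∂Q = ℓ X := by
  have hac := absolutelyContinuous_of_le_smul hQ
  induction X using Lp.induction ENNReal.one_ne_top with
  | @indicatorConst c s hs hμs =>
    have hsmul : indicatorConstLp 1 hs hμs.ne c = c • indicatorConstLp 1 hs hμs.ne (1 : ℝ) := by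
      rw [indicatorConstLp, indicatorConstLp, ← MemLp.toLp_const_smul]
      congr 1
      ext ω
      by_cases hω : ω ∈ s <;> simp [hω]
    rw [Lp.simpleFunc.coe_indicatorConst, integral_indicatorConstLp_of_absolutelyContinuous hac,
      hsmul, map_smul, hℓ, smul_eq_mul, smul_eq_mul, mul_comm]
  | add hf hg _ ihf ihg =>
    rw [map_add, ← ihf, ← ihg, integral_congr_ae (hac.ae_eq (Lp.coeFn_add _ _))]
    exact integral_add (integrable_coeFn_of_le_smul hQ _) (integrable_coeFn_of_le_smul hQ _)
  | isClosed => exact isClosed_eq (continuous_integral_coeFn_of_le_smul hQ) ℓ.continuous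

theorem indicatorConstLp_nonneg {p : ℝ≥0∞} {s : Set Ω} (hs : MeasurableSet s) (hμs : μ s ≠ ∞)
    {c : ℝ} (hc : 0 ≤ c) : 0 ≤ indicatorConstLp p hs hμs c := by
  rw [← Lp.coeFn_nonneg]
  filter_upwards [indicatorConstLp_coeFn (p := p) (hs := hs) (hμs := hμs) (c := c)] with ω hω
  rw [hω]
  exact Set.indicator_nonneg (fun _ _ => hc) ω

theorem exists_measure_integral_eq_of_nonneg [IsFiniteMeasure μ] (ℓ : StrongDual ℝ (Lp ℝ 1 μ))
    (hℓ : ∀ X, 0 ≤ X → 0 ≤ ℓ X) :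
    ∃ Q ≤ ‖ℓ‖₊ • μ, ∀ X : Lp ℝ 1 μ, ∫ ω, X ω ∂Q = ℓ X := by
  obtain ⟨ν, hν⟩ := exists_vectorMeasure_apply_eq ℓ
  have hν_nonneg : 0 ≤[Set.univ] ν := by
    rw [VectorMeasure.le_restrict_univ_iff_le]
    intro s hs
    rw [hν s hs]
    exact hℓ _ (indicatorConstLp_nonneg hs _ zero_le_one)
  let Q := SignedMeasure.toMeasureOfZeroLE ν Set.univ .univ hν_nonneg
  have hQ_real : ∀ s (hs : MeasurableSet s),
      ℓ (indicatorConstLp 1 hs (measure_ne_top μ s) 1) = Q.real s := fun s hs => by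
    rw [SignedMeasure.toMeasureOfZeroLE_real_apply _ _ _ hs, Set.univ_inter, hν s hs]
  have hQ_le : Q ≤ ‖ℓ‖₊ • μ := Measure.le_iff.2 fun s hs => calc
    Q s = ‖Q.real s‖ₑ := by rw [Real.enorm_of_nonneg measureReal_nonneg, ofReal_measureReal]
    _ ≤ (‖ℓ‖₊ • μ) s := by
      rw [← hQ_real s hs]
      exact enorm_map_indicatorConstLp_one_le ℓ hs _
  exact ⟨Q, hQ_le, integral_eq_of_forall_indicatorConstLp hQ_le hQ_real⟩

end Lp

section DominatedMeasures

variable {Ω : Type*} {mΩ : MeasurableSpace Ω} {μ : Measure Ω} {p : Lp ℝ 1 μ → ℝ}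

/-- The measures `Q` on `Ω` whose integral is dominated by the functional `p` on `L¹(μ)`: for
sublinear `p`, these are the measures in the subdifferential of `p` at `0`. Absolute continuity
makes `∫ X ∂Q` independent of the representative of `X`, and integrability is demanded because the
Bochner integral of a nonintegrable function is `0`. -/
def dominatedMeasures (p : Lp ℝ 1 μ → ℝ) : Set (Measure Ω) :=
  {Q | Q ≪ μ ∧ ∀ X : Lp ℝ 1 μ, Integrable X Q ∧ ∫ ω, X ω ∂Q ≤ p X}

theorem smul_add_smul_mem_dominatedMeasures {Q₁ Q₂ : Measure Ω} (hQ₁ : Q₁ ∈ dominatedMeasures p)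
    (hQ₂ : Q₂ ∈ dominatedMeasures p) {a b : ℝ≥0∞} (hab : a + b = 1) :
    a • Q₁ + b • Q₂ ∈ dominatedMeasures p := by
  obtain ⟨hac₁, hdom₁⟩ := hQ₁
  obtain ⟨hac₂, hdom₂⟩ := hQ₂
  have ha : a ≠ ∞ := ne_top_of_le_ne_top ENNReal.one_ne_top (hab ▸ le_self_add)
  have hb : b ≠ ∞ := ne_top_of_le_ne_top ENNReal.one_ne_top (hab ▸ le_add_self)
  have hab_real : a.toReal + b.toReal = 1 := by
    rw [← ENNReal.toReal_add ha hb, hab, ENNReal.toReal_one]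
  refine ⟨(hac₁.smul_left a).add_left (hac₂.smul_left b), fun X => ?_⟩
  have hint₁ := (hdom₁ X).1.smul_measure ha
  have hint₂ := (hdom₂ X).1.smul_measure hb
  refine ⟨hint₁.add_measure hint₂, ?_⟩
  calc ∫ ω, X ω ∂(a • Q₁ + b • Q₂) = a.toReal * ∫ ω, X ω ∂Q₁ + b.toReal * ∫ ω, X ω ∂Q₂ := by
        rw [integral_add_measure hint₁ hint₂, integral_smul_measure, integral_smul_measure,
          smul_eq_mul, smul_eq_mul]
    _ ≤ a.toReal * p X + b.toReal * p X := by
        gcongr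
        exacts [(hdom₁ X).2, (hdom₂ X).2]
    _ = p X := by rw [← add_mul, hab_real, one_mul]

variable [IsFiniteMeasure μ]

theorem isFiniteMeasure_of_mem_dominatedMeasures {Q : Measure Ω} (hQ : Q ∈ dominatedMeasures p) :
    IsFiniteMeasure Q := by
  have hone : Integrable (fun _ => (1 : ℝ)) Q :=
    (hQ.2 (Lp.const 1 μ 1)).1.congr (hQ.1.ae_eq (Lp.coeFn_const 1 μ 1))
  simpa using integrable_const_iff.1 hone

theorem le_smul_of_mem_dominatedMeasures {C : ℝ≥0} (hp : ∀ X, p X ≤ C * ‖X‖) {Q : Measure Ω}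
    (hQ : Q ∈ dominatedMeasures p) : Q ≤ C • μ := by
  have := isFiniteMeasure_of_mem_dominatedMeasures hQ
  refine Measure.le_iff.2 fun s hs => ?_
  have hreal : Q.real s ≤ C * μ.real s := by
    have := (hQ.2 (indicatorConstLp 1 hs (measure_ne_top μ s) 1)).2.trans (hp _)
    simpa [integral_indicatorConstLp_of_absolutelyContinuous hQ.1, norm_indicatorConstLp] using this
  calc Q s = ENNReal.ofReal (Q.real s) := by rw [ofReal_measureReal]
    _ ≤ ENNReal.ofReal (C * μ.real s) := ENNReal.ofReal_le_ofReal hreal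
    _ = (C • μ) s := by
        rw [ENNReal.ofReal_mul C.coe_nonneg, ENNReal.ofReal_coe_nnreal, ofReal_measureReal]
        rfl

theorem exists_mem_dominatedMeasures_integral_eq (hmono : Monotone p)
    (hsub : ∀ X Y, p (X + Y) ≤ p X + p Y)
    (hph : ∀ a : ℝ, 0 ≤ a → ∀ X, p (a • X) = a * p X) (X : Lp ℝ 1 μ) :
    ∃ Q ∈ dominatedMeasures p, ∫ ω, X ω ∂Q = p X := by
  have hp0 : p 0 = 0 := by simpa using hph 0 le_rfl 0
  obtain ⟨C, hC⟩ := exists_lipschitzWith_of_monotone_of_sublinear hmono hsub hph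
  obtain ⟨ℓ, hℓX, hℓ_le⟩ := exists_linearMap_eq_of_sublinear hsub hph X
  have hℓ_bound : ∀ Y, ℓ Y ≤ C * ‖Y‖ := fun Y =>
    (hℓ_le Y).trans ((le_abs_self _).trans (hC.norm_le_mul hp0 Y))
  have hℓ_norm : ∀ Y, ‖ℓ Y‖ ≤ C * ‖Y‖ := fun Y =>
    abs_le'.2 ⟨hℓ_bound Y, by simpa only [map_neg, norm_neg] using hℓ_bound (-Y)⟩
  have hℓ_nonneg : ∀ Y, 0 ≤ Y → 0 ≤ ℓ Y := fun Y hY => by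
    have : ℓ (-Y) ≤ 0 := (hℓ_le (-Y)).trans (hp0 ▸ hmono (neg_nonpos.2 hY))
    rwa [map_neg, neg_nonpos] at this
  obtain ⟨Q, hQ_le, hQ⟩ :=
    exists_measure_integral_eq_of_nonneg (ℓ.mkContinuous C hℓ_norm) hℓ_nonneg
  exact ⟨Q, ⟨absolutelyContinuous_of_le_smul hQ_le, fun Y =>
    ⟨integrable_coeFn_of_le_smul hQ_le Y, (hQ Y).trans_le (hℓ_le Y)⟩⟩, (hQ X).trans hℓX⟩

end DominatedMeasures

section Trim

variable {Ω : Type*} {m mΩ : MeasurableSpace Ω} {μ Q : Measure Ω}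

theorem condExp_le_of_setIntegral_le (hm : m ≤ mΩ) [SigmaFinite (Q.trim hm)]
    (htrim : Q.trim hm = μ.trim hm) {f g : Ω → ℝ} (hf : Integrable f Q) (hg : Integrable g μ)
    (hgm : AEStronglyMeasurable[m] g μ)
    (hle : ∀ s, MeasurableSet[m] s → ∫ ω in s, f ω ∂Q ≤ ∫ ω in s, g ω ∂μ) :
    Q[f | m] ≤ᵐ[μ] g := by
  obtain ⟨g', hg', hgg'⟩ := hgm
  have hcond : Integrable (Q[f | m]) (μ.trim hm) :=
    htrim ▸ integrable_condExp.trim hm stronglyMeasurable_condExp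
  have htrim_le : Q[f | m] ≤ᵐ[μ.trim hm] g' :=
    ae_le_of_forall_setIntegral_le hcond ((hg.congr hgg').trim hm hg') fun s hs _ => calc
      ∫ ω in s, (Q[f | m]) ω ∂μ.trim hm = ∫ ω in s, (Q[f | m]) ω ∂Q := by
        rw [← htrim, ← setIntegral_trim hm stronglyMeasurable_condExp hs]
      _ = ∫ ω in s, f ω ∂Q := setIntegral_condExp hm hf hs
      _ ≤ ∫ ω in s, g ω ∂μ := hle s hs
      _ = ∫ ω in s, g' ω ∂μ := integral_congr_ae (ae_restrict_of_ae hgg')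
      _ = ∫ ω in s, g' ω ∂μ.trim hm := setIntegral_trim hm hg' hs
  exact (ae_le_of_ae_le_trim htrim_le).trans hgg'.symm.le

theorem condExp_eq_of_ae_le_of_integral_eq (hm : m ≤ mΩ) [SigmaFinite (Q.trim hm)]
    (htrim : Q.trim hm = μ.trim hm) {f g : Ω → ℝ} (hg : Integrable g μ)
    (hle : Q[f | m] ≤ᵐ[μ] g) (heq : ∫ ω, f ω ∂Q = ∫ ω, g ω ∂μ) : Q[f | m] =ᵐ[μ] g := by
  have hcond : Integrable (Q[f | m]) μ := integrable_of_integrable_trim hm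
    (htrim ▸ integrable_condExp.trim hm stronglyMeasurable_condExp)
  refine (integral_eq_iff_of_ae_le hcond hg hle).1 ?_
  rw [integral_trim hm stronglyMeasurable_condExp, ← htrim,
    ← integral_trim hm stronglyMeasurable_condExp, integral_condExp hm, heq]

end Trim

section Conditional

variable {Ω : Type*} {m mΩ : MeasurableSpace Ω} {μ Q : Measure Ω} {h : Lp ℝ 1 μ → Lp ℝ 1 μ}

-- Both `s.indicator g` and `sᶜ.indicator g` are fixed by `h`. Off `s`, `Y ≤ s.indicator g` gives
-- `h Y ≤ 0`; on `s`, `Y ≤ X + sᶜ.indicator g` gives `h Y ≤ h X`.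
theorem map_le_indicator_map (hm : m ≤ mΩ) (hmono : Monotone h)
    (hsub : ∀ X Y, h (X + Y) ≤ h X + h Y)
    (hnorm : ∀ X : Lp ℝ 1 μ, AEStronglyMeasurable[m] X μ → h X = X)
    {s : Set Ω} (hs : MeasurableSet[m] s) {X Y : Lp ℝ 1 μ} (hYX : Y =ᵐ[μ] s.indicator X)
    {g : Ω → ℝ} (hgm : StronglyMeasurable[m] g) (hg : Integrable g μ)
    (hXg : ∀ᵐ ω ∂μ, |X ω| ≤ g ω) : h Y ≤ᵐ[μ] s.indicator (h X) := by
  have hfix : ∀ t, MeasurableSet[m] t → ∃ Z : Lp ℝ 1 μ, Z =ᵐ[μ] t.indicator g ∧ h Z = Z :=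
    fun t ht =>
      have hZ := (hg.indicator (hm t ht)).coeFn_toL1
      ⟨_, hZ, hnorm _ ⟨_, hgm.indicator ht, hZ⟩⟩
  obtain ⟨Z, hZ, hhZ⟩ := hfix s hs
  obtain ⟨W, hW, hhW⟩ := hfix sᶜ hs.compl
  have hYZ : h Y ≤ Z := by
    rw [← hhZ]
    refine hmono ((Lp.coeFn_le Y Z).1 ?_)
    filter_upwards [hYX, hZ, hXg] with ω hYω hZω hgω
    rw [hYω, hZω]
    exact Set.indicator_le_indicator (abs_le.1 hgω).2
  have hYW : h Y ≤ h X + W := by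
    refine (hmono ((Lp.coeFn_le Y (X + W)).1 ?_)).trans ((hsub X W).trans_eq (by rw [hhW]))
    filter_upwards [hYX, hW, hXg, Lp.coeFn_add X W] with ω hYω hWω hgω hadd
    rw [hYω, hadd, Pi.add_apply, hWω]
    by_cases hω : ω ∈ s
    · simp [hω]
    · simpa [hω, add_comm] using neg_le_iff_add_nonneg.1 (abs_le.1 hgω).1
  filter_upwards [(Lp.coeFn_le _ _).2 hYZ, (Lp.coeFn_le _ _).2 hYW, hZ, hW,
    Lp.coeFn_add (h X) W] with ω hYZω hYWω hZω hWω hadd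
  rw [hZω] at hYZω
  rw [hadd, Pi.add_apply, hWω] at hYWω
  by_cases hω : ω ∈ s
  · simpa [hω] using hYWω
  · simpa [hω] using hYZω

theorem setIntegral_le_setIntegral_map_of_abs_le (hm : m ≤ mΩ) (hmono : Monotone h)
    (hsub : ∀ X Y, h (X + Y) ≤ h X + h Y)
    (hnorm : ∀ X : Lp ℝ 1 μ, AEStronglyMeasurable[m] X μ → h X = X)
    (hQ : Q ∈ dominatedMeasures fun X => ∫ ω, h X ω ∂μ) {s : Set Ω} (hs : MeasurableSet[m] s)
    {X : Lp ℝ 1 μ} {g : Ω → ℝ} (hgm : StronglyMeasurable[m] g) (hg : Integrable g μ)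
    (hXg : ∀ᵐ ω ∂μ, |X ω| ≤ g ω) : ∫ ω in s, X ω ∂Q ≤ ∫ ω in s, h X ω ∂μ := by
  have hs' := hm s hs
  have hXs := (L1.integrable_coeFn X).indicator hs'
  calc ∫ ω in s, X ω ∂Q = ∫ ω, hXs.toL1 _ ω ∂Q := by
        rw [← integral_indicator hs', integral_congr_ae (hQ.1.ae_eq hXs.coeFn_toL1)]
    _ ≤ ∫ ω, h (hXs.toL1 _) ω ∂μ := (hQ.2 _).2
    _ ≤ ∫ ω, s.indicator (h X) ω ∂μ :=
        integral_mono_ae (L1.integrable_coeFn _) ((L1.integrable_coeFn _).indicator hs')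
          (map_le_indicator_map hm hmono hsub hnorm hs hXs.coeFn_toL1 hgm hg hXg)
    _ = ∫ ω in s, h X ω ∂μ := integral_indicator hs'

variable [IsFiniteMeasure μ]

theorem trim_eq_of_mem_dominatedMeasures (hm : m ≤ mΩ)
    (hnorm : ∀ X : Lp ℝ 1 μ, AEStronglyMeasurable[m] X μ → h X = X)
    (hQ : Q ∈ dominatedMeasures fun X => ∫ ω, h X ω ∂μ) : Q.trim hm = μ.trim hm := by
  have := isFiniteMeasure_of_mem_dominatedMeasures hQ
  refine @Measure.ext _ m _ _ fun s hs => ?_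
  rw [trim_measurableSet_eq hm hs, trim_measurableSet_eq hm hs]
  have hmul : ∀ c : ℝ, Q.real s * c ≤ μ.real s * c := fun c => by
    let Z : Lp ℝ 1 μ := indicatorConstLp 1 (hm s hs) (measure_ne_top μ s) c
    have hhZ : h Z = Z :=
      hnorm Z ⟨_, stronglyMeasurable_const.indicator hs, indicatorConstLp_coeFn⟩
    simpa only [hhZ, Z, smul_eq_mul, integral_indicatorConstLp,
      integral_indicatorConstLp_of_absolutelyContinuous hQ.1] using (hQ.2 Z).2
  exact (measureReal_eq_measureReal_iff).1
    (le_antisymm (by simpa using hmul 1) (by simpa using hmul (-1)))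

theorem setIntegral_le_setIntegral_map (hm : m ≤ mΩ) (hmono : Monotone h)
    (hsub : ∀ X Y, h (X + Y) ≤ h X + h Y)
    (hph : ∀ a : ℝ, 0 ≤ a → ∀ X, h (a • X) = a • h X)
    (hnorm : ∀ X : Lp ℝ 1 μ, AEStronglyMeasurable[m] X μ → h X = X)
    (hQ : Q ∈ dominatedMeasures fun X => ∫ ω, h X ω ∂μ) {s : Set Ω} (hs : MeasurableSet[m] s)
    (X : Lp ℝ 1 μ) : ∫ ω in s, X ω ∂Q ≤ ∫ ω in s, h X ω ∂μ := by
  obtain ⟨C, hC⟩ := exists_lipschitzWith_of_monotone_of_sublinear hmono hsub hph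
  have hp_le : ∀ Y, ∫ ω, h Y ω ∂μ ≤ C * ‖Y‖ := fun Y => calc
    ∫ ω, h Y ω ∂μ ≤ ‖∫ ω, h Y ω ∂μ‖ := Real.le_norm_self _
    _ ≤ ∫ ω, ‖h Y ω‖ ∂μ := norm_integral_le_integral_norm _
    _ = ‖h Y‖ := (L1.norm_eq_integral_norm _).symm
    _ ≤ C * ‖Y‖ := hC.norm_le_mul (by simpa using hph 0 le_rfl 0) Y
  have hQ_le := le_smul_of_mem_dominatedMeasures hp_le hQ
  refine (Lp.simpleFunc.denseRange ENNReal.one_ne_top).induction_on X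
    (isClosed_le (continuous_integral_coeFn_of_le_smul (Measure.restrict_le_self.trans hQ_le))
      ((continuous_setIntegral s).comp hC.continuous)) fun f => ?_
  obtain ⟨c, hc⟩ := (Lp.simpleFunc.toSimpleFunc f).exists_forall_norm_le
  refine setIntegral_le_setIntegral_map_of_abs_le hm hmono hsub hnorm hQ hs
    (stronglyMeasurable_const (b := c)) (integrable_const c) ?_
  filter_upwards [Lp.simpleFunc.toSimpleFunc_eq_toFun f] with ω hω
  exact hω ▸ hc ω

theorem condExp_le_map (hm : m ≤ mΩ) (hmeas : ∀ X, AEStronglyMeasurable[m] (h X) μ)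
    (hmono : Monotone h) (hsub : ∀ X Y, h (X + Y) ≤ h X + h Y)
    (hph : ∀ a : ℝ, 0 ≤ a → ∀ X, h (a • X) = a • h X)
    (hnorm : ∀ X : Lp ℝ 1 μ, AEStronglyMeasurable[m] X μ → h X = X)
    (hQ : Q ∈ dominatedMeasures fun X => ∫ ω, h X ω ∂μ) (X : Lp ℝ 1 μ) :
    Q[(X : Ω → ℝ) | m] ≤ᵐ[μ] h X :=
  have := isFiniteMeasure_of_mem_dominatedMeasures hQ
  condExp_le_of_setIntegral_le hm (trim_eq_of_mem_dominatedMeasures hm hnorm hQ) (hQ.2 X).1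
    (L1.integrable_coeFn _) (hmeas X) fun _ hs =>
      setIntegral_le_setIntegral_map hm hmono hsub hph hnorm hQ hs X

theorem exists_mem_dominatedMeasures_condExp_eq (hm : m ≤ mΩ)
    (hmeas : ∀ X, AEStronglyMeasurable[m] (h X) μ)
    (hmono : Monotone h) (hsub : ∀ X Y, h (X + Y) ≤ h X + h Y)
    (hph : ∀ a : ℝ, 0 ≤ a → ∀ X, h (a • X) = a • h X)
    (hnorm : ∀ X : Lp ℝ 1 μ, AEStronglyMeasurable[m] X μ → h X = X) (X : Lp ℝ 1 μ) :
    ∃ Q ∈ dominatedMeasures fun X => ∫ ω, h X ω ∂μ, Q[(X : Ω → ℝ) | m] =ᵐ[μ] h X := by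
  have hp_sub : ∀ Y Z, ∫ ω, h (Y + Z) ω ∂μ ≤ ∫ ω, h Y ω ∂μ + ∫ ω, h Z ω ∂μ := fun Y Z => calc
    ∫ ω, h (Y + Z) ω ∂μ ≤ ∫ ω, (h Y + h Z) ω ∂μ := integral_coeFn_mono (hsub Y Z)
    _ = ∫ ω, h Y ω ∂μ + ∫ ω, h Z ω ∂μ := by
      rw [integral_congr_ae (Lp.coeFn_add _ _)]
      exact integral_add (L1.integrable_coeFn _) (L1.integrable_coeFn _)
  have hp_ph : ∀ a : ℝ, 0 ≤ a → ∀ Y, ∫ ω, h (a • Y) ω ∂μ = a * ∫ ω, h Y ω ∂μ := fun a ha Y => by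
    rw [hph a ha, integral_congr_ae (Lp.coeFn_smul _ _)]
    exact integral_const_mul _ _
  obtain ⟨Q, hQ, hQX⟩ := exists_mem_dominatedMeasures_integral_eq
    (integral_coeFn_mono.comp hmono) hp_sub hp_ph X
  have := isFiniteMeasure_of_mem_dominatedMeasures hQ
  exact ⟨Q, hQ, condExp_eq_of_ae_le_of_integral_eq hm (trim_eq_of_mem_dominatedMeasures hm hnorm hQ)
    (L1.integrable_coeFn _) (condExp_le_map hm hmeas hmono hsub hph hnorm hQ X) hQX⟩

end Conditional

theorem stmt_10_general {Ω : Type*} {F : MeasurableSpace Ω} (μ : Measure Ω) [IsFiniteMeasure μ]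
    (G : MeasurableSpace Ω) (hG : G ≤ F) (h : Lp ℝ 1 μ → Lp ℝ 1 μ)
    (hmeas : ∀ X : Lp ℝ 1 μ, ∃ g : Ω → ℝ, Measurable[G] g ∧ (h X : Ω → ℝ) =ᵐ[μ] g)
    (hmono : Monotone h)
    (hsub : ∀ X Y : Lp ℝ 1 μ, h (X + Y) ≤ h X + h Y)
    (hph : ∀ a : ℝ, 0 ≤ a → ∀ X, h (a • X) = a • h X)
    (hnorm : ∀ X : Lp ℝ 1 μ, (∃ g : Ω → ℝ, Measurable[G] g ∧ (X : Ω → ℝ) =ᵐ[μ] g) → h X = X) :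
    ∃ 𝒬 : Set (@Measure Ω F),
      (∀ Q ∈ 𝒬, Q ≪ μ ∧ ∀ s : Set Ω, MeasurableSet[G] s → Q s = μ s) ∧
      (∀ Q₁ ∈ 𝒬, ∀ Q₂ ∈ 𝒬, ∀ t : ENNReal, t ≤ 1 → t • Q₁ + (1 - t) • Q₂ ∈ 𝒬) ∧
      ∀ X : Lp ℝ 1 μ,
        IsGreatest {g : Lp ℝ 1 μ | ∃ Q ∈ 𝒬, (g : Ω → ℝ) =ᵐ[μ] Q[(X : Ω → ℝ) | G]} (h X) := by
  have hmeas' : ∀ X, AEStronglyMeasurable[G] (h X) μ := fun X =>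
    (hmeas X).imp fun _ hg => hg.imp_left Measurable.stronglyMeasurable
  have hnorm' : ∀ X : Lp ℝ 1 μ, AEStronglyMeasurable[G] X μ → h X = X := fun X hX =>
    hnorm X (hX.imp fun _ hg => hg.imp_left StronglyMeasurable.measurable)
  refine ⟨dominatedMeasures fun X => ∫ ω, h X ω ∂μ, fun Q hQ => ⟨hQ.1, fun s hs => ?_⟩,
    fun Q₁ hQ₁ Q₂ hQ₂ t ht =>
      smul_add_smul_mem_dominatedMeasures hQ₁ hQ₂ (add_tsub_cancel_of_le ht),
    fun X => ⟨?_, ?_⟩⟩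
  · rw [← trim_measurableSet_eq hG hs, trim_eq_of_mem_dominatedMeasures hG hnorm' hQ,
      trim_measurableSet_eq hG hs]
  · obtain ⟨Q, hQ, hQX⟩ :=
      exists_mem_dominatedMeasures_condExp_eq hG hmeas' hmono hsub hph hnorm' X
    exact ⟨Q, hQ, hQX.symm⟩
  · rintro g ⟨Q, hQ, hg⟩
    exact (Lp.coeFn_le _ _).1
      (hg.le.trans (condExp_le_map hG hmeas' hmono hsub hph hnorm' hQ X))

/-- A monotone, sublinear, `G`-normalized, continuous-from-above map
`h : L¹(F) → L¹(G)` is the worst-case (upper envelope) of conditional expectations over a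
convex set of probability measures, each absolutely continuous w.r.t. `ℙ` and agreeing
with `ℙ` on `G`. -/
theorem stmt_10 {Ω : Type*} [F : MeasurableSpace Ω] (ℙ : Measure Ω)
    [IsProbabilityMeasure ℙ] (G : MeasurableSpace Ω) (hG : G ≤ F)
    (h : Lp ℝ 1 ℙ → Lp ℝ 1 ℙ)
    (hmeas : ∀ X : Lp ℝ 1 ℙ, ∃ g : Ω → ℝ, Measurable[G] g ∧ (h X : Ω → ℝ) =ᵐ[ℙ] g)
    (hmono : Monotone h)
    (hsub : ∀ X Y : Lp ℝ 1 ℙ, h (X + Y) ≤ h X + h Y)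
    (hph : ∀ a : ℝ, 0 ≤ a → ∀ X, h (a • X) = a • h X)
    (hnorm : ∀ X : Lp ℝ 1 ℙ, (∃ g : Ω → ℝ, Measurable[G] g ∧ (X : Ω → ℝ) =ᵐ[ℙ] g) →
      h X = X)
    (hca : ∀ (X : ℕ → Lp ℝ 1 ℙ) (X' Y : Lp ℝ 1 ℙ), Antitone X →
      (∀ m, |X m| ≤ Y) → IsGLB (Set.range X) X' →
      (Antitone fun m => h (X m)) ∧ IsGLB (Set.range fun m => h (X m)) (h X')) :
    ∃ 𝒬 : Set (@Measure Ω F),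
      (∀ Q ∈ 𝒬, IsProbabilityMeasure Q ∧ Q ≪ ℙ ∧
        ∀ s : Set Ω, MeasurableSet[G] s → Q s = ℙ s) ∧
      (∀ Q₁ ∈ 𝒬, ∀ Q₂ ∈ 𝒬, ∀ t : ENNReal, t ≤ 1 → t • Q₁ + (1 - t) • Q₂ ∈ 𝒬) ∧
      ∀ X : Lp ℝ 1 ℙ,
        IsLUB {g : Lp ℝ 1 ℙ | ∃ Q ∈ 𝒬, (g : Ω → ℝ) =ᵐ[ℙ] Q[(X : Ω → ℝ) | G]} (h X) := by
  obtain ⟨𝒬, h𝒬, hconvex, hgreatest⟩ := stmt_10_general ℙ G hG h hmeas hmono hsub hph hnorm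
  exact ⟨𝒬, fun Q hQ => ⟨⟨((h𝒬 Q hQ).2 _ .univ).trans measure_univ⟩, h𝒬 Q hQ⟩, hconvex,
    fun X => (hgreatest X).isLUB⟩
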